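/- Let n ≥ 2 and let d : Fin n → ℝ. Suppose that for every ρ ∈ ℂⁿ belonging to the isotropic set V := {ρ ∈ ℂⁿ : Σ_j ρ_j² = 0 and ‖ρ‖ = √2} one has Σ_{j,k} ρ_j ρ_k · (d j) = 0 (where the double sum runs over all pairs (j,k) ∈ Fin n × Fin n). Then d j = 0 for all j. -/

import Mathlib

/-!
The double sum factors as `(∑ j, ρ j * d j) * ∑ k, ρ k`. At the isotropic vectors `e_a ± i e_b` the
second factor is `1 ± i ≠ 0`, so `d a ± i d b = 0` for both signs, and adding these gives `d a = 0`.
-/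

section Factorization

variable {ι R : Type*} [Fintype ι] [NonUnitalCommSemiring R]

theorem sum_sum_mul_mul_eq_sum_mul_mul_sum (x d : ι → R) :
    ∑ j, ∑ k, x j * x k * d j = (∑ j, x j * d j) * ∑ k, x k := by
  simp only [Finset.sum_mul_sum, mul_right_comm]

end Factorization

section Single

variable {ι : Type*} [Fintype ι] [DecidableEq ι]

theorem sum_single_add_single {M : Type*} [AddCommMonoid M] (a b : ι) (z w : M) :
    ∑ j, (Pi.single a z + Pi.single b w : ι → M) j = z + w := by
  simp [Finset.sum_add_distrib]

theorem sum_single_add_single_mul {R : Type*} [NonUnitalNonAssocSemiring R] (a b : ι) (z w : R)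
    (d : ι → R) :
    ∑ j, (Pi.single a z + Pi.single b w : ι → R) j * d j = z * d a + w * d b := by
  simp [Pi.single_apply, add_mul, Finset.sum_add_distrib]

theorem sum_single_add_single_sq {R : Type*} [Semiring R] {a b : ι} (hab : a ≠ b) (z w : R) :
    ∑ j, (Pi.single a z + Pi.single b w : ι → R) j ^ 2 = z ^ 2 + w ^ 2 := by
  simp only [pow_two, sum_single_add_single_mul]
  simp [hab, hab.symm]

theorem norm_toLp_single_add_single_sq {E : Type*} [SeminormedAddCommGroup E] {a b : ι}
    (hab : a ≠ b) (z w : E) :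
    ‖WithLp.toLp 2 (Pi.single a z + Pi.single b w : ι → E)‖ ^ 2 = ‖z‖ ^ 2 + ‖w‖ ^ 2 := by
  rw [PiLp.norm_sq_eq_of_L2,
    Fintype.sum_eq_add a b hab fun j ⟨hja, hjb⟩ ↦ by simp [hja, hjb]]
  simp [hab, hab.symm]

end Single

/-- The isotropic set `V`: the vectors of Hermitian norm `√2` at which the complex bilinear (not
sesquilinear) dot product with itself vanishes. -/
def isotropicSet (ι : Type*) [Fintype ι] : Set (EuclideanSpace ℂ ι) :=
  {ρ | ∑ j, ρ j ^ 2 = 0 ∧ ‖ρ‖ = √2}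

section Isotropic

variable {ι : Type*} [Fintype ι]

theorem toLp_single_add_single_mem_isotropicSet [DecidableEq ι] {a b : ι} (hab : a ≠ b) {z : ℂ}
    (hz : z ^ 2 = -1) :
    WithLp.toLp 2 (Pi.single a 1 + Pi.single b z) ∈ isotropicSet ι := by
  have norm_sq_z : ‖z‖ ^ 2 = 1 := by rw [← norm_pow, hz, norm_neg, norm_one]
  constructor
  · simp only [sum_single_add_single_sq hab, hz]
    norm_num
  · rw [← Real.sqrt_sq (norm_nonneg _), norm_toLp_single_add_single_sq hab, norm_sq_z, norm_one]
    norm_num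

theorem add_mul_eq_zero_of_forall_mem_isotropicSet {d : ι → ℂ}
    (hvan : ∀ ρ ∈ isotropicSet ι, ∑ j, ∑ k, ρ j * ρ k * d j = 0)
    {a b : ι} (hab : a ≠ b) {z : ℂ} (hz : z ^ 2 = -1) : d a + z * d b = 0 := by
  classical
  have product_eq_zero : (d a + z * d b) * (1 + z) = 0 := by
    simpa only [sum_sum_mul_mul_eq_sum_mul_mul_sum, sum_single_add_single_mul,
      sum_single_add_single, one_mul] using hvan _ (toLp_single_add_single_mem_isotropicSet hab hz)
  have one_add_ne_zero : 1 + z ≠ 0 := by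
    intro one_add_eq_zero
    rw [← neg_eq_of_add_eq_zero_right one_add_eq_zero] at hz
    norm_num at hz
  exact (mul_eq_zero.mp product_eq_zero).resolve_right one_add_ne_zero

theorem stmt_2_general [Nontrivial ι] (d : ι → ℂ)
    (hvan : ∀ ρ ∈ isotropicSet ι, ∑ j, ∑ k, ρ j * ρ k * d j = 0) (a : ι) : d a = 0 := by
  obtain ⟨b, hba⟩ := exists_ne a
  have plus : d a + Complex.I * d b = 0 :=
    add_mul_eq_zero_of_forall_mem_isotropicSet hvan hba.symm Complex.I_sq
  have minus : d a + -Complex.I * d b = 0 :=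
    add_mul_eq_zero_of_forall_mem_isotropicSet hvan hba.symm (by rw [neg_sq, Complex.I_sq])
  linear_combination (plus + minus) / 2

end Isotropic

/-- If coefficients `d j` (corresponding to `c^j_{kk} = d_j`, independent of `k`) satisfy
`∑_{j,k} ρ_j ρ_k d_j = 0` for every isotropic vector `ρ ∈ ℂⁿ` with `∑ ρ_j² = 0` and
`‖ρ‖ = √2`, then `d ≡ 0`. -/
theorem stmt_2 (n : ℕ) (hn : 2 ≤ n) (d : Fin n → ℝ)
    (hvan : ∀ ρ : EuclideanSpace ℂ (Fin n),
      (∑ j, ρ j ^ 2 = 0) → ‖ρ‖ = Real.sqrt 2 →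
      ∑ j, ∑ k, ρ j * ρ k * (d j : ℂ) = 0) :
    ∀ j, d j = 0 := by
  have : Nontrivial (Fin n) := Fin.nontrivial_iff_two_le.mpr hn
  exact fun j ↦ Complex.ofReal_eq_zero.mp <|
    stmt_2_general (fun j ↦ (d j : ℂ)) (fun ρ hρ ↦ hvan ρ hρ.1 hρ.2) j
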